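/- arXiv:1011.5898 — 7 statements merged into one kernel-verified Lean document; each statement's English description precedes it below -/
import Mathlib

section
/- Let k be a field and (V,E), (W,F) finite digraphs. Suppose φ : (V → k) → (W → k) is a unital k-algebra homomorphism and φ_* : (E → k) → (F → k) is a k-linear map satisfying φ_*(f·ω) = φ(f)·φ_*(ω), φ_*(ω·f) = φ_*(ω)·φ(f) and φ_*(df) = d(φ(f)) for all f ∈ (V → k) and ω ∈ (E → k). Then there is a unique map ψ : W → V with φ(f) = f ∘ ψ for all f; this ψ satisfies the digraph-morphism condition: for every arrow w → z in F, either ψ(w) = ψ(z) or ψ(w) → ψ(z) in E; and φ_* is uniquely determined by ψ, namely (φ_*ω)(w→z) = ω(ψ(w)→ψ(z)) when ψ(w) → ψ(z) ∈ E and (φ_*ω)(w→z) = 0 when ψ(w) = ψ(z). -/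
/-!
Write `δ v` for the indicator function of `v`. The elements `φ (δ v) w`, for `v` in `V`, are
idempotents of `k` with sum `1`, so one of them is `1`, which makes `f ↦ φ f w` the evaluation at
a vertex `ψ w`.

Fix an arrow `w → z`, let `a = ψ w` and `b = ψ z`, and consider the functional
`θ ω = (φ_* ω)(w → z)`. Since `θ ω = θ (δ a · ω · δ b)`, the value `θ ω` depends only on the
value of `ω` at `a → b` (and on nothing if `a → b` is not an arrow). When `a ≠ b`, every scalar `c`
is the value at `a → b` of the exact form `d (c δ b)`, and on exact forms `θ` is known.
-/

section AlgHomPi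

variable {k ι : Type*} [CommSemiring k] [Finite ι]

theorem existsUnique_algHom_pi_eq_algebraMap {S : Type*} [Semiring S] [Nontrivial S] [Algebra k S]
    (hS : ∀ e : S, IsIdempotentElem e → e = 0 ∨ e = 1) (φ : (ι → k) →ₐ[k] S) :
    ∃! i, ∀ f : ι → k, φ f = algebraMap k S (f i) := by
  classical
  cases nonempty_fintype ι
  have exists_single_ne_zero : ∃ i, φ (Pi.single i 1) ≠ 0 := by
    by_contra! single_eq_zero
    have map_one_eq_zero : φ (∑ i, Pi.single i ((1 : ι → k) i)) = 0 := by
      simp only [map_sum, Pi.one_apply, single_eq_zero, Finset.sum_const_zero]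
    rw [Finset.univ_sum_single, map_one] at map_one_eq_zero
    exact one_ne_zero map_one_eq_zero
  obtain ⟨i, hi⟩ := exists_single_ne_zero
  have single_idempotent : IsIdempotentElem (Pi.single i 1 : ι → k) := by
    rw [IsIdempotentElem, ← Pi.single_mul, one_mul]
  have map_single : φ (Pi.single i 1) = 1 :=
    (hS _ (single_idempotent.map φ)).resolve_left hi
  have map_eq (f : ι → k) : φ f = algebraMap k S (f i) :=
    calc
      φ f = φ (f * Pi.single i 1) := by rw [map_mul, map_single, mul_one]
      _ = φ (f i • Pi.single i 1) := by
        rw [← Pi.single_mul_right, ← Pi.single_smul, smul_eq_mul]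
      _ = algebraMap k S (f i) := by rw [map_smul, map_single, Algebra.algebraMap_eq_smul_one]
  refine ⟨i, map_eq, fun j hj ↦ ?_⟩
  by_contra hji
  have one_eq_zero := map_single.symm.trans (hj (Pi.single i 1))
  rw [Pi.single_eq_of_ne hji, map_zero] at one_eq_zero
  exact one_ne_zero one_eq_zero

theorem existsUnique_algHom_pi_eq_comp [Nontrivial k]
    (hk : ∀ e : k, IsIdempotentElem e → e = 0 ∨ e = 1) {κ : Type*}
    (φ : (ι → k) →ₐ[k] (κ → k)) : ∃! ψ : κ → ι, ∀ f : ι → k, φ f = f ∘ ψ := by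
  choose ψ hψ ψ_unique using fun w ↦
    existsUnique_algHom_pi_eq_algebraMap hk ((Pi.evalAlgHom k (fun _ : κ ↦ k) w).comp φ)
  exact ⟨ψ, fun f ↦ funext fun w ↦ hψ w f,
    fun ψ' hψ' ↦ funext fun w ↦ ψ_unique w (ψ' w) fun f ↦ congrFun (hψ' f) w⟩

end AlgHomPi

/-- The bimodule `Ω¹ = (E → k)` of one-forms on the digraph with arrow relation `E`; an arrow
`x → y` is the pair `(x, y)` together with a proof of `E x y`. -/
abbrev DigraphOneForm (k : Type*) {V : Type*} (E : V → V → Prop) : Type _ :=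
  {p : V × V // E p.1 p.2} → k

namespace DigraphOneForm

variable {k V : Type*} {E : V → V → Prop}

/-- The differential `df(x → y) = f y - f x` of a function on the vertices. -/
def d [Sub k] (E : V → V → Prop) (f : V → k) : DigraphOneForm k E :=
  fun q ↦ f q.val.2 - f q.val.1

/-- A functional on one-forms is a bimodule map at `(a, b)` if functions acting from the left come
out as their value at `a` and functions acting from the right as their value at `b`. The pair
`(a, b)` is arbitrary, and additivity is not part of the notion. -/
structure IsBimoduleMapAt [Mul k] (a b : V) (θ : DigraphOneForm k E → k) : Prop where
  map_left_mul (f : V → k) (ω : DigraphOneForm k E) : θ (fun q ↦ f q.val.1 * ω q) = f a * θ ω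
  map_right_mul (f : V → k) (ω : DigraphOneForm k E) : θ (fun q ↦ ω q * f q.val.2) = θ ω * f b

namespace IsBimoduleMapAt

section Locality

variable [MulZeroOneClass k] {a b : V} {θ : DigraphOneForm k E → k}

theorem map_zero (hθ : IsBimoduleMapAt a b θ) : θ 0 = 0 := by
  calc
    θ 0 = θ (fun q ↦ (0 : V → k) q.val.1 * (0 : DigraphOneForm k E) q) :=
      congrArg θ (funext fun _ ↦ (zero_mul 0).symm)
    _ = 0 := by rw [hθ.map_left_mul, Pi.zero_apply, zero_mul]

theorem map_single_mul_mul_single [DecidableEq V] (hθ : IsBimoduleMapAt a b θ)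
    (ω : DigraphOneForm k E) :
    θ (fun q ↦ (Pi.single a 1 : V → k) q.val.1 * (ω q * (Pi.single b 1 : V → k) q.val.2)) =
      θ ω := by
  rw [hθ.map_left_mul, hθ.map_right_mul, Pi.single_eq_same, Pi.single_eq_same, one_mul, mul_one]

theorem map_congr (hθ : IsBimoduleMapAt a b θ) {ω η : DigraphOneForm k E}
    (hωη : ∀ h : E a b, ω ⟨(a, b), h⟩ = η ⟨(a, b), h⟩) : θ ω = θ η := by
  classical
  rw [← hθ.map_single_mul_mul_single ω, ← hθ.map_single_mul_mul_single η]
  congr 1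
  ext ⟨⟨x, y⟩, hxy⟩
  by_cases hx : x = a
  · by_cases hy : y = b
    · subst hx hy
      simp only [hωη]
    · simp only [Pi.single_eq_of_ne hy, mul_zero]
  · simp only [Pi.single_eq_of_ne hx, zero_mul]

theorem map_eq_zero (hθ : IsBimoduleMapAt a b θ) (hab : ¬ E a b) (ω : DigraphOneForm k E) :
    θ ω = 0 :=
  (hθ.map_congr fun h ↦ absurd h hab).trans hθ.map_zero

end Locality

section Differential

variable [NonAssocRing k] {a b : V} {θ : DigraphOneForm k E → k}

theorem eq_or_rel [Nontrivial k] (hθ : IsBimoduleMapAt a b θ)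
    (map_d : ∀ f : V → k, θ (d E f) = f b - f a) : a = b ∨ E a b := by
  classical
  by_contra! ⟨hne, hab⟩
  have zero_eq_one := (hθ.map_eq_zero hab _).symm.trans (map_d (Pi.single b 1))
  rw [Pi.single_eq_same, Pi.single_eq_of_ne hne, sub_zero] at zero_eq_one
  exact zero_ne_one zero_eq_one

theorem map_eq_apply (hθ : IsBimoduleMapAt a b θ)
    (map_d : ∀ f : V → k, θ (d E f) = f b - f a) (hne : a ≠ b) (hab : E a b)
    (ω : DigraphOneForm k E) : θ ω = ω ⟨(a, b), hab⟩ := by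
  classical
  set f : V → k := Pi.single b (ω ⟨(a, b), hab⟩) with hf
  have sub_eq : f b - f a = ω ⟨(a, b), hab⟩ := by
    rw [hf, Pi.single_eq_same, Pi.single_eq_of_ne hne, sub_zero]
  calc
    θ ω = θ (d E f) := hθ.map_congr fun _ ↦ sub_eq.symm
    _ = f b - f a := map_d f
    _ = ω ⟨(a, b), hab⟩ := sub_eq

theorem map_eq_dite [Decidable (E a b)] (hb : ¬ E b b) (hθ : IsBimoduleMapAt a b θ)
    (map_d : ∀ f : V → k, θ (d E f) = f b - f a) (ω : DigraphOneForm k E) :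
    θ ω = if h : E a b then ω ⟨(a, b), h⟩ else 0 := by
  split_ifs with hab
  · have hne : a ≠ b := fun h ↦ hb (h ▸ hab)
    exact hθ.map_eq_apply map_d hne hab ω
  · exact hθ.map_eq_zero hab ω

end Differential

end IsBimoduleMapAt

end DigraphOneForm

open DigraphOneForm in
theorem stmt_1_general {k : Type*} [CommRing k] [Nontrivial k]
    (hk : ∀ e : k, IsIdempotentElem e → e = 0 ∨ e = 1)
    {V W : Type*} [Finite V] (E : V → V → Prop) (F : W → W → Prop) [DecidableRel E]
    (hE : ∀ x, ¬ E x x) (φ : (V → k) →ₐ[k] (W → k))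
    (φs : DigraphOneForm k E → DigraphOneForm k F)
    (hleft : ∀ (f : V → k) (ω : DigraphOneForm k E) (p : {p : W × W // F p.1 p.2}),
      φs (fun q ↦ f q.val.1 * ω q) p = φ f p.val.1 * φs ω p)
    (hright : ∀ (f : V → k) (ω : DigraphOneForm k E) (p : {p : W × W // F p.1 p.2}),
      φs (fun q ↦ ω q * f q.val.2) p = φs ω p * φ f p.val.2)
    (hd : ∀ (f : V → k) (p : {p : W × W // F p.1 p.2}),
      φs (d E f) p = d F (φ f) p) :
    ∃ ψ : W → V,
      (∀ f : V → k, φ f = f ∘ ψ) ∧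
      (∀ ψ' : W → V, (∀ f : V → k, φ f = f ∘ ψ') → ψ' = ψ) ∧
      (∀ w z, F w z → ψ w = ψ z ∨ E (ψ w) (ψ z)) ∧
      (∀ (ω : DigraphOneForm k E) (p : {p : W × W // F p.1 p.2}),
        φs ω p = if h : E (ψ p.val.1) (ψ p.val.2)
          then ω ⟨(ψ p.val.1, ψ p.val.2), h⟩ else 0) := by
  obtain ⟨ψ, hψ, ψ_unique⟩ := existsUnique_algHom_pi_eq_comp hk φ
  have isBimoduleMapAt (p : {p : W × W // F p.1 p.2}) :
      IsBimoduleMapAt (ψ p.val.1) (ψ p.val.2) (φs · p) :=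
    ⟨fun f ω ↦ by rw [hleft, hψ, Function.comp_apply],
      fun f ω ↦ by rw [hright, hψ, Function.comp_apply]⟩
  have map_d (p : {p : W × W // F p.1 p.2}) (f : V → k) :
      φs (d E f) p = f (ψ p.val.2) - f (ψ p.val.1) := by
    rw [hd, hψ, d, Function.comp_apply, Function.comp_apply]
  exact ⟨ψ, hψ, ψ_unique,
    fun w z hwz ↦ (isBimoduleMapAt ⟨(w, z), hwz⟩).eq_or_rel (map_d ⟨(w, z), hwz⟩),
    fun ω p ↦ (isBimoduleMapAt p).map_eq_dite (hE _) (map_d p) ω⟩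

/-- fullness direction: every differentiable algebra map between the
differential calculi of two digraphs comes from a unique digraph morphism `ψ`, and
`φ_*` is the map induced by `ψ`. -/
theorem stmt_1 {k : Type*} [Field k] {V W : Type*} [Fintype V] [Fintype W]
    (E : V → V → Prop) (F : W → W → Prop) [DecidableRel E]
    (hE : ∀ x, ¬ E x x) (hF : ∀ w, ¬ F w w)
    (φ : (V → k) →ₐ[k] (W → k))
    (φs : ({p : V × V // E p.1 p.2} → k) →ₗ[k] ({p : W × W // F p.1 p.2} → k))
    (hleft : ∀ (f : V → k) (ω : {p : V × V // E p.1 p.2} → k)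
        (p : {p : W × W // F p.1 p.2}),
        φs (fun q => f q.val.1 * ω q) p = φ f p.val.1 * φs ω p)
    (hright : ∀ (f : V → k) (ω : {p : V × V // E p.1 p.2} → k)
        (p : {p : W × W // F p.1 p.2}),
        φs (fun q => ω q * f q.val.2) p = φs ω p * φ f p.val.2)
    (hd : ∀ (f : V → k) (p : {p : W × W // F p.1 p.2}),
        φs (fun q => f q.val.2 - f q.val.1) p = φ f p.val.2 - φ f p.val.1) :
    ∃ ψ : W → V,
      (∀ f : V → k, φ f = f ∘ ψ) ∧
      (∀ ψ' : W → V, (∀ f : V → k, φ f = f ∘ ψ') → ψ' = ψ) ∧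
      (∀ w z, F w z → ψ w = ψ z ∨ E (ψ w) (ψ z)) ∧
      (∀ (ω : {p : V × V // E p.1 p.2} → k) (p : {p : W × W // F p.1 p.2}),
        φs ω p = if h : E (ψ p.val.1) (ψ p.val.2)
          then ω ⟨(ψ p.val.1, ψ p.val.2), h⟩ else 0) :=
  stmt_1_general (fun _ ↦ IsIdempotentElem.iff_eq_zero_or_one.mp) E F hE φ φs hleft hright hd
end

section
/- Let k be a field, Γ = (V,~) a finite simple graph viewed as a bidirected digraph with directed edge set D = {(x,y) : x ~ y}, and let connection data be given: weights g_{x→y} ∈ k for each directed edge, scalars σ^{x,y,z}_w ∈ k for each pair of 2-paths (x,y,z), (x,w,z) with the same endpoints, and scalars α^{x,y}_w ∈ k for each directed edge (x,y) and 2-path (x,w,y). Define ∇ : (D → k) → (P₂ → k) by (∇ω)(u,v,w) = ω(v,w) − Σ_{y : (u,y,w) ∈ P₂} σ^{u,y,w}_v·ω(u,y) + 1_{u~w}·α^{u,w}_v·ω(u,w), define B(ρ)(x) = Σ_{y ~ x} g_{y→x}·ρ(x,y,x), and define (df)(x,y) = f(y) − f(x). Then: (1) the Laplace–Beltrami operator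 Δf := B(∇(df)) is the weighted graph Laplacian (Δf)(x) = Σ_{y ~ x}(f(x) − f(y))·γ_{x,y}, where γ_{x,y} = g_{y→x} + Σ_{w ~ x} g_{w→x}·σ^{x,y,x}_w; (2) B ∘ σ = B, where σ also denotes the induced operator (σρ)(x,w,z) = Σ_y σ^{x,y,z}_w·ρ(x,y,z), holds if and only if Σ_{w ~ x} g_{w→x}·σ^{x,y,x}_w = g_{y→x} for all directed edges (x,y), and in that case γ_{x,y} = 2·g_{y→x}. -/
open Finset

/-- Exterior derivative of a function on vertices: `(df)(x→y) = f(y) − f(x)`. -/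
def dd {k V : Type*} [Ring k] (f : V → k) : V → V → k := fun x y => f y - f x

/-- The bimodule connection determined by the data `(σ, α)` on a bidirected graph:
`(∇ω)(u,v,w) = ω(v,w) − Σ_y σ^{u,y,w}_v ω(u,y) + 1_{u~w} α^{u,w}_v ω(u,w)`. -/
def nabla {k V : Type*} [Ring k] [Fintype V] (G : SimpleGraph V) [DecidableRel G.Adj]
    (σ : V → V → V → V → k) (α : V → V → V → k) (ω : V → V → k) : V → V → V → k :=
  fun u v w =>
    ω v w - (∑ y : V, if G.Adj u y ∧ G.Adj y w then σ u y w v * ω u y else 0)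
      + (if G.Adj u w then α u w v * ω u w else 0)

/-- The inverse metric `B = ( , )` of the weights `g`: `B(ρ)(x) = Σ_{y~x} g_{y→x} ρ(x,y,x)`. -/
def Bm {k V : Type*} [Ring k] [Fintype V] (G : SimpleGraph V) [DecidableRel G.Adj]
    (g : V → V → k) (ρ : V → V → V → k) : V → k :=
  fun x => ∑ y : V, if G.Adj y x then g y x * ρ x y x else 0

/-- The weight `γ_{x,y} = g_{y→x} + Σ_{w~x} g_{w→x} σ^{x,y,x}_w`. -/
def gam {k V : Type*} [Ring k] [Fintype V] (G : SimpleGraph V) [DecidableRel G.Adj]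
    (g : V → V → k) (σ : V → V → V → V → k) (x y : V) : k :=
  g y x + ∑ w : V, if G.Adj w x then g w x * σ x y x w else 0

/-- The operator on `Ω¹ ⊗_A Ω¹` induced by the coefficients `σ`:
`(σρ)(x,w,z) = Σ_y σ^{x,y,z}_w ρ(x,y,z)`. -/
def sigOp {k V : Type*} [Ring k] [Fintype V] (G : SimpleGraph V) [DecidableRel G.Adj]
    (σ : V → V → V → V → k) (ρ : V → V → V → k) : V → V → V → k :=
  fun x w z => ∑ y : V, if G.Adj x y ∧ G.Adj y z then σ x y z w * ρ x y z else 0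

/-! Precomposing the contraction `( , )` with `σ` again gives a contraction, whose weights are
`gσ(y→x) = Σ_{w~x} g_{w→x} σ^{x,y,x}_w`. As a contraction determines its weights on the edges,
`( , )σ = ( , )` means `gσ = g`. The contraction only sees closed 2-paths `(x,y,x)`, on which the
`α`-term of `∇` vanishes because there are no loops. Since `df` is antisymmetric, the two
remaining terms of `( , )∇df` combine to a contraction with weights `γ = g + gσ`. -/

theorem dd_swap {k V : Type*} [Ring k] (f : V → k) (x y : V) : dd f y x = -dd f x y :=
  (neg_sub (f y) (f x)).symm

section

variable {k V : Type*} [Ring k] [Fintype V] (G : SimpleGraph V) [DecidableRel G.Adj]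

/-- The weights `gσ` obtained from the metric weights `g` by precomposing the inverse metric with
the operator of `σ`. They are indexed like `g`, with `sigWeight G g σ y x` on the arrow `y → x`. -/
def sigWeight (g : V → V → k) (σ : V → V → V → V → k) (y x : V) : k :=
  ∑ w : V, if G.Adj w x then g w x * σ x y x w else 0

theorem Bm_congr {g g' : V → V → k} {ρ ρ' : V → V → V → k} {x : V}
    (h : ∀ y, G.Adj y x → g y x * ρ x y x = g' y x * ρ' x y x) :
    Bm G g ρ x = Bm G g' ρ' x :=
  sum_congr rfl fun y _ => ite_congr rfl (h y) fun _ => rfl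

theorem Bm_add_left (g g' : V → V → k) (ρ : V → V → V → k) (x : V) :
    Bm G (g + g') ρ x = Bm G g ρ x + Bm G g' ρ x := by
  simp only [Bm, Pi.add_apply, add_mul, ← sum_filter, sum_add_distrib]

theorem Bm_sub_right (g : V → V → k) (ρ ρ' : V → V → V → k) (x : V) :
    Bm G g (ρ - ρ') x = Bm G g ρ x - Bm G g ρ' x := by
  simp only [Bm, Pi.sub_apply, mul_sub, ← sum_filter, sum_sub_distrib]

theorem Bm_neg_right (g : V → V → k) (ρ : V → V → V → k) (x : V) :
    Bm G g (-ρ) x = -Bm G g ρ x := by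
  simp only [Bm, Pi.neg_apply, mul_neg, ← sum_filter, sum_neg_distrib]

theorem Bm_single [DecidableEq V] (g : V → V → k) {x y : V} (h : G.Adj y x) :
    Bm G g (fun _ v _ => (Pi.single y 1 : V → k) v) x = g y x := by
  simp [Bm, Pi.single_apply, ← sum_filter, h]

theorem forall_Bm_eq_iff {g g' : V → V → k} {x : V} :
    (∀ ρ, Bm G g ρ x = Bm G g' ρ x) ↔ ∀ y, G.Adj y x → g y x = g' y x := by
  classical
  refine ⟨fun h y hy => ?_, fun h ρ => Bm_congr G fun y hy => by rw [h y hy]⟩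
  rw [← Bm_single G g hy, h, Bm_single G g' hy]

theorem Bm_sigOp (g : V → V → k) (σ : V → V → V → V → k) (ρ : V → V → V → k) (x : V) :
    Bm G g (sigOp G σ ρ) x = Bm G (sigWeight G g σ) ρ x := by
  simp only [Bm, sigOp, sigWeight, G.adj_comm x, and_self, mul_sum, sum_mul,
    ← sum_filter, mul_assoc]
  exact sum_comm

theorem Bm_sigOp_eq_iff {g : V → V → k} {σ : V → V → V → V → k} :
    (∀ ρ x, Bm G g (sigOp G σ ρ) x = Bm G g ρ x) ↔
      ∀ x y, G.Adj x y → sigWeight G g σ y x = g y x := by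
  simp only [Bm_sigOp]
  rw [forall_comm]
  simp only [forall_Bm_eq_iff, G.adj_comm]

theorem nabla_apply_closed (σ : V → V → V → V → k) (α : V → V → V → k) (ω : V → V → k)
    (x y : V) :
    nabla G σ α ω x y x = ω y x - sigOp G σ (fun u v _ => ω u v) x y x := by
  simp [nabla, sigOp]

theorem Bm_nabla (g : V → V → k) (σ : V → V → V → V → k) (α : V → V → V → k) (ω : V → V → k)
    (x : V) :
    Bm G g (nabla G σ α ω) x =
      Bm G g (fun _ v w => ω v w) x - Bm G (sigWeight G g σ) (fun u v _ => ω u v) x := by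
  rw [← Bm_sigOp, ← Bm_sub_right]
  exact Bm_congr G fun y _ => congrArg (g y x * ·) (nabla_apply_closed G σ α ω x y)

theorem Bm_nabla_dd (g : V → V → k) (σ : V → V → V → V → k) (α : V → V → V → k) (f : V → k)
    (x : V) :
    Bm G g (nabla G σ α (dd f)) x =
      ∑ y : V, if G.Adj y x then gam G g σ x y * (f x - f y) else 0 :=
  calc
    Bm G g (nabla G σ α (dd f)) x
      = Bm G g (fun _ v w => dd f v w) x + Bm G (sigWeight G g σ) (-fun u v _ => dd f u v) x := by
        rw [Bm_nabla, Bm_neg_right, sub_eq_add_neg]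
    _ = Bm G g (fun _ v w => dd f v w) x + Bm G (sigWeight G g σ) (fun _ v w => dd f v w) x :=
        congrArg _ <| Bm_congr G fun y _ => congrArg (_ * ·) (dd_swap f x y).symm
    _ = Bm G (g + sigWeight G g σ) (fun _ v w => dd f v w) x := (Bm_add_left ..).symm
    _ = ∑ y : V, if G.Adj y x then gam G g σ x y * (f x - f y) else 0 := rfl

theorem gam_eq_two_mul {g : V → V → k} {σ : V → V → V → V → k} {x y : V}
    (h : sigWeight G g σ y x = g y x) : gam G g σ x y = 2 * g y x :=
  (congrArg (g y x + ·) h).trans (two_mul _).symm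

/-- Over a noncommutative ring, the weights `γ` have to stand to the left of `f x - f y`. -/
theorem stmt_7_general (g : V → V → k) (σ : V → V → V → V → k) (α : V → V → V → k) :
    (∀ (f : V → k) (x : V),
        Bm G g (nabla G σ α (dd f)) x
          = ∑ y : V, if G.Adj y x then gam G g σ x y * (f x - f y) else 0) ∧
    ((∀ (ρ : V → V → V → k) (x : V), Bm G g (sigOp G σ ρ) x = Bm G g ρ x) ↔
      (∀ x y : V, G.Adj x y →
        (∑ w : V, if G.Adj w x then g w x * σ x y x w else 0) = g y x)) ∧
    ((∀ x y : V, G.Adj x y →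
        (∑ w : V, if G.Adj w x then g w x * σ x y x w else 0) = g y x) →
      ∀ x y : V, G.Adj x y → gam G g σ x y = 2 * g y x) :=
  ⟨Bm_nabla_dd G g σ α, Bm_sigOp_eq_iff G, fun h x y hxy => gam_eq_two_mul G (h x y hxy)⟩

end

/-- (1) the Laplace–Beltrami operator `Δ = ( , )∇d` of a bimodule
connection `(σ,α)` and metric weights `g` on a bidirected graph is the weighted graph
Laplacian with weights `γ_{x,y}`; (2) `( , )σ = ( , )` iff
`Σ_{w~x} g_{w→x} σ^{x,y,x}_w = g_{y→x}` for all edges, in which case `γ_{x,y} = 2 g_{y→x}`. -/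
theorem stmt_7 {k V : Type*} [Field k] [Fintype V] (G : SimpleGraph V)
    [DecidableRel G.Adj] (g : V → V → k) (σ : V → V → V → V → k) (α : V → V → V → k) :
    (∀ (f : V → k) (x : V),
        Bm G g (nabla G σ α (dd f)) x
          = ∑ y : V, if G.Adj y x then (f x - f y) * gam G g σ x y else 0) ∧
    ((∀ (ρ : V → V → V → k) (x : V), Bm G g (sigOp G σ ρ) x = Bm G g ρ x) ↔
      (∀ x y : V, G.Adj x y →
        (∑ w : V, if G.Adj w x then g w x * σ x y x w else 0) = g y x)) ∧
    ((∀ x y : V, G.Adj x y →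
        (∑ w : V, if G.Adj w x then g w x * σ x y x w else 0) = g y x) →
      ∀ x y : V, G.Adj x y → gam G g σ x y = 2 * g y x) := by
  simpa only [mul_comm (_ - _)] using stmt_7_general G g σ α
end

section
/- Let G be a finite group and C ⊆ G \ {e} a subset closed under inversion and under conjugation by its own elements (a, b ∈ C implies b⁻¹ab ∈ C). Then: (i) if x⁻¹y ∈ C and y⁻¹z ∈ C then x⁻¹(xy⁻¹z) ∈ C and (xy⁻¹z)⁻¹z ∈ C (every 2-step x → y → z in the Cayley graph induces a 2-step x → xy⁻¹z → z); (ii) for all x, v, w, z ∈ G with x⁻¹z ∈ C, x⁻¹v ∈ C, v⁻¹w ∈ C and w⁻¹z ∈ C, the set {y ∈ G : y⁻¹x ∈ C, y⁻¹w ∈ C, w = yx⁻¹z, v = xy⁻¹w} has exactly one element when v = z and is empty when v ≠ z. (Claim (ii) is the metric-compatibility equation for the Cayley-graph connection σ_{x,z}(y) = xy⁻¹z with the Euclidean metric.) -/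
/-!
The two equations `w = y * x⁻¹ * z` and `v = x * y⁻¹ * w` hold in a group exactly when
`y = w * z⁻¹ * x` and `v = z`, so the only candidate for `y` is the intermediate vertex of the
2-step from `w` to `x` induced by `w → z → x`. Claim (i), applied to that 2-step, then gives the
required adjacencies.
-/

section CayleyGraph

variable {G : Type*} [Group G]

theorem eq_mul_inv_mul_and_eq_mul_inv_mul_iff {x y v w z : G} :
    w = y * x⁻¹ * z ∧ v = x * y⁻¹ * w ↔ y = w * z⁻¹ * x ∧ v = z := by
  have solve_for_y : w = y * x⁻¹ * z ↔ y = w * z⁻¹ * x := by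
    rw [← mul_inv_eq_iff_eq_mul, eq_mul_inv_iff_mul_eq, eq_comm]
  rw [solve_for_y]
  refine and_congr_right fun hy ↦ ?_
  have hz : x * y⁻¹ * w = z := by rw [hy]; group
  rw [hz]

variable {C : Set G}

theorem two_step_mul_inv_mul (hCconj : ∀ a ∈ C, ∀ b ∈ C, b⁻¹ * a * b ∈ C) {x y z : G}
    (hxy : x⁻¹ * y ∈ C) (hyz : y⁻¹ * z ∈ C) :
    x⁻¹ * (x * y⁻¹ * z) ∈ C ∧ (x * y⁻¹ * z)⁻¹ * z ∈ C := by
  have first_step : x⁻¹ * (x * y⁻¹ * z) = y⁻¹ * z := by group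
  have second_step : (x * y⁻¹ * z)⁻¹ * z = (y⁻¹ * z)⁻¹ * (x⁻¹ * y) * (y⁻¹ * z) := by group
  rw [first_step, second_step]
  exact ⟨hyz, hCconj _ hxy _ hyz⟩

theorem inv_mul_mem_symm (hCinv : ∀ a ∈ C, a⁻¹ ∈ C) {x y : G} (hxy : x⁻¹ * y ∈ C) :
    y⁻¹ * x ∈ C := by
  simpa only [mul_inv_rev, inv_inv] using hCinv _ hxy

theorem metric_compatibility_iff (hCinv : ∀ a ∈ C, a⁻¹ ∈ C)
    (hCconj : ∀ a ∈ C, ∀ b ∈ C, b⁻¹ * a * b ∈ C) {x v w z : G}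
    (hxz : x⁻¹ * z ∈ C) (hwz : w⁻¹ * z ∈ C) (y : G) :
    (y⁻¹ * x ∈ C ∧ y⁻¹ * w ∈ C ∧ w = y * x⁻¹ * z ∧ v = x * y⁻¹ * w) ↔
      y = w * z⁻¹ * x ∧ v = z := by
  rw [eq_mul_inv_mul_and_eq_mul_inv_mul_iff]
  refine ⟨fun ⟨_, _, hy⟩ ↦ hy, ?_⟩
  rintro ⟨rfl, rfl⟩
  obtain ⟨hwy, hyx⟩ := two_step_mul_inv_mul hCconj hwz (inv_mul_mem_symm hCinv hxz)
  exact ⟨hyx, inv_mul_mem_symm hCinv hwy, rfl, rfl⟩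

theorem stmt_8_general (hCinv : ∀ a ∈ C, a⁻¹ ∈ C)
    (hCconj : ∀ a ∈ C, ∀ b ∈ C, b⁻¹ * a * b ∈ C) :
    (∀ x y z : G, x⁻¹ * y ∈ C → y⁻¹ * z ∈ C →
        x⁻¹ * (x * y⁻¹ * z) ∈ C ∧ (x * y⁻¹ * z)⁻¹ * z ∈ C) ∧
    (∀ x v w z : G, x⁻¹ * z ∈ C → w⁻¹ * z ∈ C →
        ((v = z → ∃! y : G,
            y⁻¹ * x ∈ C ∧ y⁻¹ * w ∈ C ∧ w = y * x⁻¹ * z ∧ v = x * y⁻¹ * w) ∧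
         (v ≠ z → ¬ ∃ y : G,
            y⁻¹ * x ∈ C ∧ y⁻¹ * w ∈ C ∧ w = y * x⁻¹ * z ∧ v = x * y⁻¹ * w))) := by
  refine ⟨fun _ _ _ ↦ two_step_mul_inv_mul hCconj, fun x v w z hxz hwz ↦ ?_⟩
  simp only [metric_compatibility_iff hCinv hCconj hxz hwz]
  exact ⟨fun hvz ↦ ⟨w * z⁻¹ * x, ⟨rfl, hvz⟩, fun _ hy ↦ hy.1⟩,
    fun hvz ⟨_, hy⟩ ↦ hvz hy.2⟩

end CayleyGraph

/-- on a Cayley graph of `(G, C)` with `C` closed under inversion and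
self-conjugation: (i) every 2-step `x → y → z` induces a 2-step `x → xy⁻¹z → z`;
(ii) the metric-compatibility equation holds: the relevant set of `y`'s has exactly
one element when `v = z` and is empty when `v ≠ z`. -/
theorem stmt_8 {G : Type*} [Group G] [Fintype G]
    (C : Set G) (hC1 : (1 : G) ∉ C) (hCinv : ∀ a ∈ C, a⁻¹ ∈ C)
    (hCconj : ∀ a ∈ C, ∀ b ∈ C, b⁻¹ * a * b ∈ C) :
    (∀ x y z : G, x⁻¹ * y ∈ C → y⁻¹ * z ∈ C →
        x⁻¹ * (x * y⁻¹ * z) ∈ C ∧ (x * y⁻¹ * z)⁻¹ * z ∈ C) ∧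
    (∀ x v w z : G, x⁻¹ * z ∈ C → x⁻¹ * v ∈ C → v⁻¹ * w ∈ C → w⁻¹ * z ∈ C →
        ((v = z → ∃! y : G,
            y⁻¹ * x ∈ C ∧ y⁻¹ * w ∈ C ∧ w = y * x⁻¹ * z ∧ v = x * y⁻¹ * w) ∧
         (v ≠ z → ¬ ∃ y : G,
            y⁻¹ * x ∈ C ∧ y⁻¹ * w ∈ C ∧ w = y * x⁻¹ * z ∧ v = x * y⁻¹ * w))) :=
  let ⟨two_step, compatibility⟩ := stmt_8_general hCinv hCconj
  ⟨two_step, fun x v w z hxz _ _ hwz ↦ compatibility x v w z hxz hwz⟩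
end

section
/- Let k be a field, G a finite group and C ⊆ G \ {e} closed under inversion and under conjugation by its own elements. On the space of k-valued functions on the directed Cayley edges D = {(x,xa) : x ∈ G, a ∈ C}, define the Maurer–Cartan edge Laplacian Δ as the linear operator determined on the basis of indicator 1-forms ω_{x→y} by Δω_{x→y} = |C|·ω_{x→y} − 2·Σ_{z : y⁻¹z ∈ C} ω_{xy⁻¹z → z} + Σ ω_{x→s}, where the last sum runs over triples (w,z,s) ∈ G³ such that (x,y,z), (x,w,z), (w,z,s) and (w,x,s) are all 2-paths of the Cayley graph, w = xy⁻¹z and x = wz⁻¹s. Then for every a ∈ C, Δe_a = 2·(|C|·e_a − Σ_{b∈C} e_{b⁻¹ab}). -/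
open Finset

/-- The indicator 1-form `ω_{x→y}` on pairs of vertices. -/
def indForm {k : Type*} [Field k] {G : Type*} [DecidableEq G] (x y : G) : G → G → k :=
  fun u v => if u = x ∧ v = y then 1 else 0

/-- The left-invariant 1-form `e_a` on a Cayley graph: `e_a(x, xb) = δ_{a,b}`. -/
def eForm {k : Type*} [Field k] {G : Type*} [Group G] [DecidableEq G] (a : G) :
    G → G → k :=
  fun u v => if u⁻¹ * v = a then 1 else 0

/-!
Each term of the last sum in `Δ ω_{x→y}` changes the midpoint of `(x, y, z)` to `w = xy⁻¹z`, then
the midpoint of `(w, z, s)` to `x = wz⁻¹s`. These two equations force `s = y` and leave only `z`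
free, so the whole sum is `|C| ω_{x→y}`. Putting `z = yb` turns the middle sum into one over the
right translates `ω_{xb→yb}`. Hence `Δ ω_{x→y} = 2 (|C| ω_{x→y} - ∑_{b ∈ C} ω_{xb→yb})`. Now sum
over `x` with `y = xa`: the edges `x → xa` add up to `e_a`, and their translates `xb → xab` to
`e_{b⁻¹ab}`.
-/

section CayleyGraph

variable {G : Type*} [Group G]

/-- Two successive midpoint changes: `w` replaces `y` in the 2-path `(x, y, z)`, and `x` replaces
`z` in the 2-path `(w, z, s)`. This is the range of the last sum in the Maurer–Cartan edge
Laplacian of `ω_{x→y}`; it is reducible so that decidability is inferred from the conjunction. -/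
abbrev IsDoubleMidpointChange (C : Finset G) (x y w z s : G) : Prop :=
  (x⁻¹ * y ∈ C ∧ y⁻¹ * z ∈ C) ∧ (x⁻¹ * w ∈ C ∧ w⁻¹ * z ∈ C) ∧
    (w⁻¹ * z ∈ C ∧ z⁻¹ * s ∈ C) ∧ (w⁻¹ * x ∈ C ∧ x⁻¹ * s ∈ C) ∧
    w = x * y⁻¹ * z ∧ x = w * z⁻¹ * s

theorem isDoubleMidpointChange_iff {C : Finset G} (hCinv : ∀ a ∈ C, a⁻¹ ∈ C)
    (hCconj : ∀ a ∈ C, ∀ b ∈ C, b⁻¹ * a * b ∈ C) {x y : G} (hxy : x⁻¹ * y ∈ C) (w z s : G) :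
    IsDoubleMidpointChange C x y w z s ↔ s = y ∧ w = x * y⁻¹ * z ∧ y⁻¹ * z ∈ C := by
  constructor
  · rintro ⟨⟨-, hyz⟩, -, -, -, hw, hx⟩
    have hs : s = z * w⁻¹ * x := by rw [hx]; group
    exact ⟨by rw [hs, hw]; group, hw, hyz⟩
  · rintro ⟨rfl, rfl, hsz⟩
    have hxw : x⁻¹ * (x * s⁻¹ * z) ∈ C := by simpa only [mul_assoc, inv_mul_cancel_left] using hsz
    have hwx : (x * s⁻¹ * z)⁻¹ * x ∈ C := by
      simpa only [mul_inv_rev, inv_inv] using hCinv _ hxw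
    have hzs : z⁻¹ * s ∈ C := by simpa only [mul_inv_rev, inv_inv] using hCinv _ hsz
    have hwz : (x * s⁻¹ * z)⁻¹ * z ∈ C := by
      convert hCconj _ hxy _ hsz using 1
      group
    exact ⟨⟨hxy, hsz⟩, ⟨hxw, hwz⟩, ⟨hwz, hzs⟩, ⟨hwx, hxy⟩, rfl, by group⟩

variable [Fintype G] [DecidableEq G] {M : Type*} [AddCommMonoid M]

theorem sum_ite_inv_mul_mem (C : Finset G) (y : G) (f : G → M) :
    (∑ z, if y⁻¹ * z ∈ C then f z else 0) = ∑ b ∈ C, f (y * b) := by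
  rw [← Equiv.sum_comp (Equiv.mulLeft y)]
  simp only [Equiv.coe_mulLeft, inv_mul_cancel_left, sum_ite_mem, univ_inter]

theorem sum_ite_isDoubleMidpointChange {C : Finset G} (hCinv : ∀ a ∈ C, a⁻¹ ∈ C)
    (hCconj : ∀ a ∈ C, ∀ b ∈ C, b⁻¹ * a * b ∈ C) {x y : G} (hxy : x⁻¹ * y ∈ C) (f : G → M) :
    (∑ w, ∑ z, ∑ s, if IsDoubleMidpointChange C x y w z s then f s else 0) = #C • f y := by
  calc
    _ = ∑ w, ∑ z, if w = x * y⁻¹ * z then if y⁻¹ * z ∈ C then f y else 0 else 0 := by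
      simp only [isDoubleMidpointChange_iff hCinv hCconj hxy, ite_and, sum_ite_eq', mem_univ,
        if_true]
    _ = ∑ z, if y⁻¹ * z ∈ C then f y else 0 := by
      rw [sum_comm]
      simp only [sum_ite_eq', mem_univ, if_true]
    _ = #C • f y := by rw [sum_ite_inv_mul_mem, sum_const]

theorem sum_indForm_mul_mul {k : Type*} [Field k] (b c : G) :
    ∑ x, (indForm (x * b) (x * c) : G → G → k) = eForm (b⁻¹ * c) := by
  ext u v
  have hx (x : G) : u = x * b ↔ u * b⁻¹ = x := mul_inv_eq_iff_eq_mul.symm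
  simp only [Finset.sum_apply, indForm, eForm, hx, ite_and, sum_ite_eq, mem_univ, if_true,
    inv_mul_eq_iff_eq_mul, mul_assoc]

end CayleyGraph

/-- the Maurer–Cartan edge Laplacian of a Cayley graph, defined on the
basis of indicator 1-forms by the stated formula, satisfies
`Δ e_a = 2(|C| e_a − Σ_{b∈C} e_{b⁻¹ab})` on the left-invariant forms. -/
theorem stmt_11 {k : Type*} [Field k] {G : Type*} [Group G] [Fintype G] [DecidableEq G]
    (C : Finset G) (hC1 : (1 : G) ∉ C) (hCinv : ∀ a ∈ C, a⁻¹ ∈ C)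
    (hCconj : ∀ a ∈ C, ∀ b ∈ C, b⁻¹ * a * b ∈ C)
    (Δ : (G → G → k) →ₗ[k] (G → G → k))
    (hΔ : ∀ x y : G, x⁻¹ * y ∈ C →
      Δ (indForm x y)
        = (C.card : k) • indForm x y
          - (2 : k) • (∑ z : G, if y⁻¹ * z ∈ C
              then (indForm (x * y⁻¹ * z) z : G → G → k) else 0)
          + ∑ w : G, ∑ z : G, ∑ s : G,
              if ((x⁻¹ * y ∈ C ∧ y⁻¹ * z ∈ C) ∧ (x⁻¹ * w ∈ C ∧ w⁻¹ * z ∈ C) ∧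
                  (w⁻¹ * z ∈ C ∧ z⁻¹ * s ∈ C) ∧ (w⁻¹ * x ∈ C ∧ x⁻¹ * s ∈ C) ∧
                  w = x * y⁻¹ * z ∧ x = w * z⁻¹ * s)
              then (indForm x s : G → G → k) else 0) :
    ∀ a ∈ C, Δ (eForm a)
      = (2 : k) • ((C.card : k) • (eForm a : G → G → k)
          - ∑ b ∈ C, (eForm (b⁻¹ * a * b) : G → G → k)) := by
  have hΔ_edge (x y : G) (hxy : x⁻¹ * y ∈ C) : Δ (indForm x y) =
      (2 : k) • ((C.card : k) • indForm x y - ∑ b ∈ C, indForm (x * b) (y * b)) := by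
    rw [hΔ x y hxy, sum_ite_inv_mul_mem, sum_ite_isDoubleMidpointChange hCinv hCconj hxy,
      ← Nat.cast_smul_eq_nsmul k]
    simp only [mul_assoc, inv_mul_cancel_left]
    module
  intro a ha
  have h_edges : ∑ x, (indForm x (x * a) : G → G → k) = eForm a := by
    simpa only [mul_one, inv_one, one_mul] using sum_indForm_mul_mul (k := k) 1 a
  have h_translates (b : G) :
      ∑ x, (indForm (x * b) (x * a * b) : G → G → k) = eForm (b⁻¹ * a * b) := by
    simpa only [mul_assoc] using sum_indForm_mul_mul (k := k) b (a * b)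
  calc
    Δ (eForm a) = ∑ x, Δ (indForm x (x * a)) := by rw [← h_edges, map_sum]
    _ = ∑ x, (2 : k) • ((C.card : k) • indForm x (x * a) -
          ∑ b ∈ C, indForm (x * b) (x * a * b)) :=
      sum_congr rfl fun x _ => hΔ_edge x (x * a) (by rwa [inv_mul_cancel_left])
    _ = (2 : k) • ((C.card : k) • eForm a - ∑ b ∈ C, eForm (b⁻¹ * a * b)) := by
      rw [← smul_sum, sum_sub_distrib, ← smul_sum, sum_comm, h_edges]
      simp only [h_translates]
end

section
/- Let G = (V,~) be a finite simple graph and M its canonical edge-Laplacian matrix over ℝ, indexed by the set D of directed edges. Then every column sum of M vanishes: Σ_{e ∈ D} M[e,f] = 0 for all f ∈ D (equivalently, the constant 1-form θ satisfies Δθ = 0). If moreover G is connected with at least two vertices, then all row sums Σ_{f ∈ D} M[e,f] vanish if and only if G is regular. -/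
open Finset

/-- The canonical edge-Laplacian matrix of a graph, indexed by directed edges:
`M[(x,y),(w,z)] = deg(x)·1_{(w,z)=(x,y)} + 1_{w=x} − 2·1_{w=y}`. -/
def edgeLapMatrix {V : Type*} [Fintype V] [DecidableEq V] (G : SimpleGraph V)
    [DecidableRel G.Adj] (k : Type*) [Ring k] :
    Matrix {p : V × V // G.Adj p.1 p.2} {p : V × V // G.Adj p.1 p.2} k :=
  Matrix.of fun e f =>
    (if f = e then (G.degree e.val.1 : k) else 0)
      + (if f.val.1 = e.val.1 then 1 else 0)
      - 2 * (if f.val.1 = e.val.2 then 1 else 0)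

/-! Each vertex is the first endpoint of `deg v` directed edges and the second endpoint of `deg v`
directed edges. Hence the column of `M` at `(w, z)` sums to `deg w + deg w - 2 * deg w = 0`, and its
row at `(x, y)` sums to `2 * (deg x - deg y)`. The rows therefore all sum to zero exactly when the
degree is constant along edges, which in a connected graph means constant. -/

section DirectedEdges

variable {V : Type*} (G : SimpleGraph V)

/-- The darts of `G`, as the subtype of `V × V` that indexes `edgeLapMatrix`. -/
@[simps]
def dartEquivSubtype : G.Dart ≃ {p : V × V // G.Adj p.1 p.2} where
  toFun d := ⟨d.toProd, d.adj⟩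
  invFun e := ⟨e.val, e.prop⟩

variable [Fintype V] [DecidableEq V] [DecidableRel G.Adj]

theorem card_directedEdges_fst_eq (v : V) :
    #{e : {p : V × V // G.Adj p.1 p.2} | e.val.1 = v} = G.degree v := by
  rw [← G.dart_fst_fiber_card_eq_degree]
  exact card_equiv (dartEquivSubtype G).symm (by simp)

theorem card_directedEdges_snd_eq (v : V) :
    #{e : {p : V × V // G.Adj p.1 p.2} | e.val.2 = v} = G.degree v := by
  rw [← G.dart_fst_fiber_card_eq_degree]
  exact card_equiv ((dartEquivSubtype G).symm.trans
    (SimpleGraph.Dart.symm_involutive (G := G)).toPerm) (by simp)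

end DirectedEdges

section Connectivity

variable {V : Type*} {G : SimpleGraph V}

theorem eq_of_reachable_of_forall_adj {α : Type*} {f : V → α}
    (hf : ∀ x y, G.Adj x y → f x = f y) {x y : V} (hxy : G.Reachable x y) : f x = f y := by
  obtain ⟨p⟩ := hxy
  induction p with
  | nil => rfl
  | cons hadj _ ih => exact (hf _ _ hadj).trans ih

theorem exists_isRegularOfDegree_iff_forall_adj [G.LocallyFinite] (hG : G.Preconnected) :
    (∃ d, G.IsRegularOfDegree d) ↔ ∀ x y, G.Adj x y → G.degree x = G.degree y := by
  constructor
  · rintro ⟨d, hd⟩ x y -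
    rw [hd.degree_eq, hd.degree_eq]
  · intro hdeg
    obtain _ | ⟨⟨v⟩⟩ := isEmpty_or_nonempty V
    · exact ⟨0, .of_isEmpty⟩
    · exact ⟨G.degree v, fun w => eq_of_reachable_of_forall_adj hdeg (hG w v)⟩

end Connectivity

section EdgeLaplacian

variable {V : Type*} [Fintype V] [DecidableEq V] (G : SimpleGraph V) [DecidableRel G.Adj]
  (k : Type*) [Ring k]

theorem sum_edgeLapMatrix_col_eq_zero (f : {p : V × V // G.Adj p.1 p.2}) :
    ∑ e, edgeLapMatrix G k e f = 0 := by
  calc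
    ∑ e, edgeLapMatrix G k e f
      = G.degree f.val.1 + G.degree f.val.1 - 2 * G.degree f.val.1 := by
        simp only [edgeLapMatrix, Matrix.of_apply, sum_sub_distrib, sum_add_distrib, ← mul_sum,
          sum_ite_eq, mem_univ, if_true, eq_comm (a := f.val.1), sum_boole,
          card_directedEdges_fst_eq, card_directedEdges_snd_eq]
    _ = 0 := by rw [two_mul, sub_self]

theorem sum_edgeLapMatrix_row (e : {p : V × V // G.Adj p.1 p.2}) :
    ∑ f, edgeLapMatrix G k e f = 2 * (G.degree e.val.1 - G.degree e.val.2) := by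
  calc
    ∑ f, edgeLapMatrix G k e f
      = G.degree e.val.1 + G.degree e.val.1 - 2 * G.degree e.val.2 := by
        simp only [edgeLapMatrix, Matrix.of_apply, sum_sub_distrib, sum_add_distrib, ← mul_sum,
          sum_ite_eq', mem_univ, if_true, sum_boole, card_directedEdges_fst_eq]
    _ = 2 * (G.degree e.val.1 - G.degree e.val.2) := by rw [← two_mul, mul_sub]

theorem sum_edgeLapMatrix_row_eq_zero_iff [CharZero k] (e : {p : V × V // G.Adj p.1 p.2}) :
    ∑ f, edgeLapMatrix G k e f = 0 ↔ G.degree e.val.1 = G.degree e.val.2 := by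
  rw [sum_edgeLapMatrix_row, mul_sub, sub_eq_zero]
  norm_cast
  exact Nat.mul_right_inj two_ne_zero

theorem stmt_12_general [CharZero k] :
    (∀ f : {p : V × V // G.Adj p.1 p.2}, ∑ e, edgeLapMatrix G k e f = 0) ∧
    (G.Preconnected →
      ((∀ e : {p : V × V // G.Adj p.1 p.2}, ∑ f, edgeLapMatrix G k e f = 0) ↔
        ∃ d : ℕ, G.IsRegularOfDegree d)) := by
  refine ⟨sum_edgeLapMatrix_col_eq_zero G k, fun hG => ?_⟩
  simp only [sum_edgeLapMatrix_row_eq_zero_iff, exists_isRegularOfDegree_iff_forall_adj hG,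
    Subtype.forall, Prod.forall]

end EdgeLaplacian

/-- every column sum of the canonical edge-Laplacian matrix vanishes
(i.e. `Δθ = 0`); and for a connected graph with at least two vertices all row sums
vanish iff the graph is regular. -/
theorem stmt_12 {V : Type*} [Fintype V] [DecidableEq V] (G : SimpleGraph V)
    [DecidableRel G.Adj] :
    (∀ f : {p : V × V // G.Adj p.1 p.2},
        (∑ e : {p : V × V // G.Adj p.1 p.2}, edgeLapMatrix G ℝ e f) = 0) ∧
    (G.Connected → 1 < Fintype.card V →
      ((∀ e : {p : V × V // G.Adj p.1 p.2},
          (∑ f : {p : V × V // G.Adj p.1 p.2}, edgeLapMatrix G ℝ e f) = 0) ↔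
        ∃ d : ℕ, G.IsRegularOfDegree d)) := by
  obtain ⟨hcol, hrow⟩ := stmt_12_general G ℝ
  exact ⟨hcol, fun hG _ => hrow hG.preconnected⟩
end

section
/- Let k be a field and G = (V,~) a finite connected simple graph with at least two vertices (so every vertex has degree ≥ 1). Let M be the canonical edge-Laplacian matrix over k, indexed by the set D of directed edges, and let L be the graph Laplacian matrix on vertices. Then the characteristic polynomial of M factors as charpoly(M) = charpoly(2·L) · Π_{x ∈ V} (X − deg(x))^{deg(x) − 1}, where deg(x) is regarded as an element of k. -/
open Finset Polynomial

/-- The graph-Laplacian matrix on vertices: `L[x,y] = deg(x)·1_{x=y} − 1_{x~y}`. -/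
def lapMatrix {V : Type*} [Fintype V] [DecidableEq V] (G : SimpleGraph V)
    [DecidableRel G.Adj] (k : Type*) [Ring k] : Matrix V V k :=
  Matrix.of fun x y =>
    (if x = y then (G.degree x : k) else 0) - (if G.Adj x y then 1 else 0)

/-!
Let `T` and `H` be the vertex-by-arc incidence matrices recording tails and heads, let `D` be the
diagonal matrix of degrees and `D'` the diagonal matrix of the degrees of the tails of the arcs.
Then `M = D' + (T - 2H)ᵀ T`, while `D + T (T - 2H)ᵀ = 2L` because `T Tᵀ = D` and `T Hᵀ` is the
adjacency matrix. Moreover `T D' = D T`, and under such an intertwining relation the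
characteristic polynomials satisfy `χ(D' + UT) χ(D) = χ(D') χ(D + TU)`. When no vertex is
isolated, the monic polynomial `χ(D)` divides `χ(D')` and can be cancelled.
-/

section Intertwining

variable {R m n : Type*} [CommRing R] [Fintype m] [Fintype n] [DecidableEq m] [DecidableEq n]

theorem charpoly_add_mul_mul_charpoly_of_mul_eq_mul {A : Matrix m m R} {B : Matrix n n R}
    {P : Matrix n m R} (hP : P * A = B * P) (U : Matrix m n R) :
    (A + U * P).charpoly * B.charpoly = A.charpoly * (B + P * U).charpoly := by
  let Q := Matrix.fromBlocks A U (-(B * P)) B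
  let S : Matrix (m ⊕ n) (m ⊕ n) R := Matrix.fromBlocks 1 0 P 1
  have hQS : Q * S = Matrix.fromBlocks (A + U * P) U 0 B := by
    simp [Q, S, Matrix.fromBlocks_multiply]
  have hSQ : S * Q = Matrix.fromBlocks A U 0 (B + P * U) := by
    simp [Q, S, Matrix.fromBlocks_multiply, hP, add_comm]
  calc (A + U * P).charpoly * B.charpoly
      = (Q * S).charpoly := by rw [hQS, Matrix.charpoly_fromBlocks_zero₂₁]
    _ = (S * Q).charpoly := Matrix.charpoly_mul_comm Q S
    _ = A.charpoly * (B + P * U).charpoly := by rw [hSQ, Matrix.charpoly_fromBlocks_zero₂₁]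

end Intertwining

/-- The arcs (directed edges) of a graph: ordered pairs `(tail, head)` of adjacent vertices. This
is the index type of `edgeLapMatrix`. -/
abbrev Arc {V : Type*} (G : SimpleGraph V) : Type _ :=
  {p : V × V // G.Adj p.1 p.2}

section Arcs

variable {V : Type*} [Fintype V] (G : SimpleGraph V) [DecidableRel G.Adj]

@[to_additive]
theorem prod_arc_eq_prod_prod_neighborFinset {M : Type*} [CommMonoid M] (f : V → V → M) :
    ∏ e : Arc G, f e.val.1 e.val.2 = ∏ x, ∏ y ∈ G.neighborFinset x, f x y := by
  rw [← Finset.prod_subtype {p : V × V | G.Adj p.1 p.2} (by simp) fun p => f p.1 p.2]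
  exact Finset.prod_finset_product' _ _ _ (by simp)

theorem prod_arc_tail_eq_prod_pow_degree {M : Type*} [CommMonoid M] (f : V → M) :
    ∏ e : Arc G, f e.val.1 = ∏ x, f x ^ G.degree x := by
  simp [prod_arc_eq_prod_prod_neighborFinset G fun x _ => f x]

end Arcs

section IncidenceMatrices

variable {V : Type*} [DecidableEq V] (G : SimpleGraph V) (k : Type*)

/-- The vertex-by-arc incidence matrix with a `1` at `(x, e)` when `x` is the tail of `e`. -/
def tailMatrix [Zero k] [One k] : Matrix V (Arc G) k :=
  Matrix.of fun x e => if e.val.1 = x then 1 else 0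

/-- The vertex-by-arc incidence matrix with a `1` at `(x, e)` when `x` is the head of `e`. -/
def headMatrix [Zero k] [One k] : Matrix V (Arc G) k :=
  Matrix.of fun x e => if e.val.2 = x then 1 else 0

variable [Fintype V] [DecidableRel G.Adj]

/-- The diagonal matrix indexed by the arcs whose entry at an arc is the degree of its tail. -/
def tailDegMatrix [AddMonoidWithOne k] : Matrix (Arc G) (Arc G) k :=
  Matrix.diagonal fun e => (G.degree e.val.1 : k)

theorem tailMatrix_mul_tailDegMatrix [NonAssocSemiring k] :
    tailMatrix G k * tailDegMatrix G k = G.degMatrix k * tailMatrix G k := by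
  ext x e
  by_cases h : e.val.1 = x
  · simp [tailMatrix, tailDegMatrix, SimpleGraph.degMatrix, ← h]
  · simp [tailMatrix, tailDegMatrix, SimpleGraph.degMatrix, h]

theorem tailMatrix_mul_of_apply [NonAssocSemiring k] {n : Type*} (N : V → V → n → k)
    (x : V) (j : n) :
    (tailMatrix G k * Matrix.of fun (e : Arc G) i => N e.val.1 e.val.2 i) x j
      = ∑ y ∈ G.neighborFinset x, N x y j := by
  simp only [tailMatrix, Matrix.mul_apply, Matrix.of_apply, ite_mul, one_mul, zero_mul]
  rw [sum_arc_eq_sum_sum_neighborFinset G fun a b => if a = x then N a b j else 0,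
    Finset.sum_eq_single_of_mem x (Finset.mem_univ x)
      fun a _ ha => Finset.sum_eq_zero fun _ _ => if_neg ha]
  simp only [if_true]

theorem tailMatrix_mul_transpose_tailMatrix [NonAssocSemiring k] :
    tailMatrix G k * (tailMatrix G k).transpose = G.degMatrix k := by
  ext x y
  calc (tailMatrix G k * (tailMatrix G k).transpose) x y
      = ∑ _z ∈ G.neighborFinset x, if x = y then 1 else 0 :=
        tailMatrix_mul_of_apply G k (fun a _ i => if a = i then 1 else 0) x y
    _ = G.degMatrix k x y := by simp [SimpleGraph.degMatrix, Matrix.diagonal_apply]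

theorem tailMatrix_mul_transpose_headMatrix [NonAssocSemiring k] :
    tailMatrix G k * (headMatrix G k).transpose = G.adjMatrix k := by
  ext x y
  calc (tailMatrix G k * (headMatrix G k).transpose) x y
      = ∑ z ∈ G.neighborFinset x, if z = y then 1 else 0 :=
        tailMatrix_mul_of_apply G k (fun _ b i => if b = i then 1 else 0) x y
    _ = G.adjMatrix k x y := by simp

theorem edgeLapMatrix_eq_tailDegMatrix_add [Ring k] :
    edgeLapMatrix G k = tailDegMatrix G k
      + (tailMatrix G k - (2 : k) • headMatrix G k).transpose * tailMatrix G k := by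
  ext e f
  simp [edgeLapMatrix, tailDegMatrix, tailMatrix, headMatrix, Matrix.mul_apply,
    Matrix.diagonal_apply, eq_comm, add_sub_assoc]

theorem lapMatrix_eq_degMatrix_sub_adjMatrix [Ring k] :
    lapMatrix G k = G.degMatrix k - G.adjMatrix k := by
  ext x y
  simp [lapMatrix, SimpleGraph.degMatrix, Matrix.diagonal_apply]

theorem two_smul_lapMatrix_eq_degMatrix_add [CommRing k] :
    (2 : k) • lapMatrix G k = G.degMatrix k
      + tailMatrix G k * (tailMatrix G k - (2 : k) • headMatrix G k).transpose := by
  rw [lapMatrix_eq_degMatrix_sub_adjMatrix, Matrix.transpose_sub, Matrix.transpose_smul,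
    Matrix.mul_sub, Matrix.mul_smul, tailMatrix_mul_transpose_tailMatrix,
    tailMatrix_mul_transpose_headMatrix]
  module

end IncidenceMatrices

section Charpoly

variable {V : Type*} [Fintype V] [DecidableEq V] (G : SimpleGraph V) [DecidableRel G.Adj]
  (k : Type*) [CommRing k]

theorem charpoly_degMatrix :
    (G.degMatrix k).charpoly = ∏ x, (X - C (G.degree x : k)) :=
  Matrix.charpoly_diagonal _

theorem charpoly_tailDegMatrix :
    (tailDegMatrix G k).charpoly = ∏ x, (X - C (G.degree x : k)) ^ G.degree x := by
  rw [tailDegMatrix, Matrix.charpoly_diagonal]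
  exact prod_arc_tail_eq_prod_pow_degree G fun x => X - C (G.degree x : k)

theorem charpoly_tailDegMatrix_eq_charpoly_degMatrix_mul (hG : ∀ x, ¬ G.IsIsolated x) :
    (tailDegMatrix G k).charpoly
      = (G.degMatrix k).charpoly * ∏ x, (X - C (G.degree x : k)) ^ (G.degree x - 1) := by
  rw [charpoly_tailDegMatrix, charpoly_degMatrix, ← Finset.prod_mul_distrib]
  refine Finset.prod_congr rfl fun x _ => (mul_pow_sub_one ?_ _).symm
  exact ((G.degree_pos x).mpr (hG x)).ne'

theorem charpoly_edgeLapMatrix_mul_charpoly_degMatrix :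
    (edgeLapMatrix G k).charpoly * (G.degMatrix k).charpoly
      = (tailDegMatrix G k).charpoly * ((2 : k) • lapMatrix G k).charpoly := by
  rw [edgeLapMatrix_eq_tailDegMatrix_add, two_smul_lapMatrix_eq_degMatrix_add]
  exact charpoly_add_mul_mul_charpoly_of_mul_eq_mul (tailMatrix_mul_tailDegMatrix G k) _

end Charpoly

theorem stmt_14_general {k : Type*} [CommRing k] {V : Type*} [Fintype V] [DecidableEq V]
    (G : SimpleGraph V) [DecidableRel G.Adj] (hG : ∀ x, ¬ G.IsIsolated x) :
    (edgeLapMatrix G k).charpoly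
      = ((2 : k) • lapMatrix G k).charpoly
        * ∏ x : V, (X - C (G.degree x : k)) ^ (G.degree x - 1) := by
  have hreg : IsRegular (G.degMatrix k).charpoly := (Matrix.charpoly_monic _).isRegular
  refine hreg.right ?_
  calc (edgeLapMatrix G k).charpoly * (G.degMatrix k).charpoly
      = (tailDegMatrix G k).charpoly * ((2 : k) • lapMatrix G k).charpoly :=
        charpoly_edgeLapMatrix_mul_charpoly_degMatrix G k
    _ = ((2 : k) • lapMatrix G k).charpoly
          * (∏ x : V, (X - C (G.degree x : k)) ^ (G.degree x - 1))
          * (G.degMatrix k).charpoly := by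
        rw [charpoly_tailDegMatrix_eq_charpoly_degMatrix_mul G k hG]
        ring

/-- for a connected graph with at least two vertices, the characteristic
polynomial of the canonical edge Laplacian is
`charpoly(2L) · Π_x (X − deg x)^{deg x − 1}`. -/
theorem stmt_14 {k : Type*} [Field k] {V : Type*} [Fintype V] [DecidableEq V]
    (G : SimpleGraph V) [DecidableRel G.Adj]
    (hconn : G.Connected) (hcard : 1 < Fintype.card V) :
    (edgeLapMatrix G k).charpoly
      = ((2 : k) • lapMatrix G k).charpoly
        * ∏ x : V, (X - C (G.degree x : k)) ^ (G.degree x - 1) := by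
  have : Nontrivial V := Fintype.one_lt_card_iff_nontrivial.mp hcard
  exact stmt_14_general G hconn.preconnected.not_isIsolated
end

section
/- Let G = (V,~) be a finite connected simple graph with at least two vertices, M its canonical edge-Laplacian matrix over ℝ and L its graph Laplacian matrix on vertices. Suppose that for every vertex x ∈ V the real number deg(x) is not an eigenvalue of 2·L, i.e. det(2·L − deg(x)·I) ≠ 0 for all x ∈ V. Then the linear endomorphism of ℝ^D determined by M is diagonalisable: ℝ^D admits a basis consisting of eigenvectors of M (equivalently, the supremum of the eigenspaces of M is all of ℝ^D). -/
open Finset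

/-!
Write `P ω x = ∑_{y ~ x} ω(x,y)` for the total outflow of an edge function `ω`,
`B s (x,y) = s x - 2 s y` for a vertex function `s`, and `deg` for multiplication by the degree,
taken at the source on edges. Then `M = deg + B P` and `P B = 2 L - deg`. On `ker P` the matrix `M`
is multiplication by the degree of the source, and `ker P` is the direct sum of its parts supported
on the edges with a given source, so it is spanned by eigenvectors. If `2 L s = μ s` and `μ` is not
a degree, then `(μ - deg)⁻¹ B s` is an eigenvector of `M` for `μ` which `P` sends to `s`. As `2 L`
is symmetric, such `s` span the target of `P`, so these lifts together with `ker P` span all edge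
functions.
-/

open Matrix Module.End

section LinearAlgebra

theorem iSup_eigenspace_eq_top_of_eigenspace_le_map {R E F : Type*} [CommRing R]
    [AddCommGroup E] [Module R E] [AddCommGroup F] [Module R F]
    {f : Module.End R E} {g : Module.End R F} (p : E →ₗ[R] F)
    (hker : LinearMap.ker p ≤ ⨆ μ, eigenspace f μ)
    (hlift : ∀ μ, eigenspace g μ ≤ (eigenspace f μ).map p)
    (hg : ⨆ μ, eigenspace g μ = ⊤) :
    ⨆ μ, eigenspace f μ = ⊤ := by
  have hmap : (⨆ μ, eigenspace f μ).map p = ⊤ := by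
    rw [Submodule.map_iSup, eq_top_iff, ← hg]
    exact iSup_mono hlift
  rw [← sup_eq_left.mpr hker, ← Submodule.comap_map_eq, hmap, Submodule.comap_top]

theorem iSup_eigenspace_mulVecLin_eq_top_of_isHermitian {𝕜 n : Type*} [RCLike 𝕜] [Fintype n]
    {A : Matrix n n 𝕜} (hA : A.IsHermitian) :
    ⨆ μ, eigenspace A.mulVecLin μ = ⊤ := by
  classical
  let b := hA.eigenvectorBasis.toBasis.map (WithLp.linearEquiv 2 𝕜 (n → 𝕜))
  rw [eq_top_iff, ← b.span_eq, Submodule.span_le]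
  rintro _ ⟨i, rfl⟩
  refine Submodule.mem_iSup_of_mem (hA.eigenvalues i : 𝕜) (mem_eigenspace_iff.mpr ?_)
  rw [mulVecLin_apply, ← RCLike.real_smul_eq_coe_smul]
  exact hA.mulVec_eigenvectorBasis i

theorem eigenspace_mulVecLin_eq_bot_of_det_ne_zero {R n : Type*} [CommRing R] [IsDomain R]
    [Fintype n] [DecidableEq n] {A : Matrix n n R} {μ : R}
    (h : (A - μ • (1 : Matrix n n R)).det ≠ 0) :
    eigenspace A.mulVecLin μ = ⊥ := by
  refine (Submodule.eq_bot_iff _).mpr fun v hv => eq_zero_of_mulVec_eq_zero h ?_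
  rw [sub_mulVec, smul_mulVec, one_mulVec, sub_eq_zero]
  exact mem_eigenspace_iff.mp hv

end LinearAlgebra

section EdgeLaplacian

variable {V : Type*} (G : SimpleGraph V)

/-- The edges of `G` taken with both orientations, `(x, y)` being the one from `x` to `y`. This is
the index type of `edgeLapMatrix`, reducibly, so that it inherits the instances of the subtype. -/
abbrev DirectedEdge : Type _ := {p : V × V // G.Adj p.1 p.2}

/-- The operator `B`: the difference of the values of a vertex function at the ends of an edge,
with the target counted twice. -/
def weightedDiff {k : Type*} [Ring k] (s : V → k) (e : DirectedEdge G) : k :=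
  s e.val.1 - 2 * s e.val.2

variable [Fintype V] [DecidableEq V] [DecidableRel G.Adj]

theorem lapMatrix_eq_simpleGraph_lapMatrix (k : Type*) [Ring k] :
    lapMatrix G k = G.lapMatrix k := by
  ext x y
  simp [lapMatrix, SimpleGraph.lapMatrix, SimpleGraph.degMatrix, diagonal_apply]

theorem isHermitian_two_smul_lapMatrix (k : Type*) [CommRing k] [StarRing k] :
    ((2 : k) • lapMatrix G k).IsHermitian := by
  rw [lapMatrix_eq_simpleGraph_lapMatrix]
  exact (G.isHermitian_lapMatrix k).smul (.ofNat 2)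

/-- The outflow operator `P`: it sends an edge function to the vertex function whose value at `x`
is the sum over the edges starting at `x`. -/
def outSum (k : Type*) [Semiring k] : (DirectedEdge G → k) →ₗ[k] (V → k) :=
  LinearMap.pi fun x => ∑ e : DirectedEdge G with e.val.1 = x, LinearMap.proj e

variable {k : Type*}

section Semiring

variable [Semiring k]

theorem outSum_apply (ω : DirectedEdge G → k) (x : V) :
    outSum G k ω x = ∑ e : DirectedEdge G with e.val.1 = x, ω e := by
  simp [outSum]

theorem outSum_apply_eq_sum_neighborFinset (g : V → V → k) (x : V) :
    outSum G k (fun e => g e.val.1 e.val.2) x = ∑ y ∈ G.neighborFinset x, g x y := by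
  rw [outSum_apply]
  refine Finset.sum_bij' (fun e _ => e.val.2)
    (fun y hy => ⟨(x, y), (G.mem_neighborFinset x y).mp hy⟩) ?_ ?_ ?_ ?_ ?_ <;> aesop

theorem outSum_mul_source (a : V → k) (ω : DirectedEdge G → k) :
    outSum G k (fun e => a e.val.1 * ω e) = a * outSum G k ω := by
  ext x
  rw [Pi.mul_apply, outSum_apply, outSum_apply, Finset.mul_sum]
  refine Finset.sum_congr rfl fun e he => ?_
  rw [(Finset.mem_filter.mp he).2]

end Semiring

theorem edgeLapMatrix_mulVec_apply [Ring k] (ω : DirectedEdge G → k) (e : DirectedEdge G) :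
    (edgeLapMatrix G k *ᵥ ω) e =
      G.degree e.val.1 * ω e + weightedDiff G (outSum G k ω) e := by
  simp [edgeLapMatrix, weightedDiff, mulVec, dotProduct, outSum_apply, sub_mul, add_mul,
    Finset.sum_sub_distrib, Finset.sum_add_distrib, Finset.mul_sum, Finset.sum_filter,
    add_sub_assoc]

theorem outSum_weightedDiff [CommRing k] (s : V → k) (x : V) :
    outSum G k (weightedDiff G s) x =
      (((2 : k) • lapMatrix G k) *ᵥ s) x - G.degree x * s x := by
  have hsum : outSum G k (weightedDiff G s) x = ∑ y ∈ G.neighborFinset x, (s x - 2 * s y) :=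
    outSum_apply_eq_sum_neighborFinset G (fun a b => s a - 2 * s b) x
  rw [hsum, lapMatrix_eq_simpleGraph_lapMatrix, smul_mulVec, Pi.smul_apply,
    SimpleGraph.lapMatrix_mulVec_apply, Finset.sum_sub_distrib, ← Finset.mul_sum,
    Finset.sum_const, SimpleGraph.card_neighborFinset_eq_degree, nsmul_eq_mul, smul_eq_mul]
  ring

theorem ker_outSum_le_iSup_eigenspace [CommRing k] :
    LinearMap.ker (outSum G k) ≤ ⨆ μ, eigenspace (edgeLapMatrix G k).mulVecLin μ := by
  intro ω hω
  have hsum : ω = ∑ x, fun e => (Pi.single x 1 : V → k) e.val.1 * ω e := by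
    ext e
    simp [Pi.single_apply]
  rw [hsum]
  refine Submodule.sum_mem _ fun x _ =>
    Submodule.mem_iSup_of_mem (G.degree x : k) (mem_eigenspace_iff.mpr ?_)
  ext e
  rw [mulVecLin_apply, edgeLapMatrix_mulVec_apply, outSum_mul_source, LinearMap.mem_ker.mp hω]
  by_cases hx : e.val.1 = x
  · subst hx
    simp [weightedDiff]
  · simp [weightedDiff, hx]

variable [Field k]

theorem eigenspace_two_smul_lapMatrix_le_map_outSum {μ : k} (hμ : ∀ x, μ ≠ G.degree x) :
    eigenspace ((2 : k) • lapMatrix G k).mulVecLin μ ≤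
      (eigenspace (edgeLapMatrix G k).mulVecLin μ).map (outSum G k) := by
  intro s hs
  have hne : ∀ x, μ - G.degree x ≠ 0 := fun x => sub_ne_zero.mpr (hμ x)
  let ω : DirectedEdge G → k := fun e => (μ - G.degree e.val.1)⁻¹ * weightedDiff G s e
  have hω : outSum G k ω = s := by
    ext x
    have hsx : (((2 : k) • lapMatrix G k) *ᵥ s) x = μ * s x :=
      congrFun (mem_eigenspace_iff.mp hs) x
    rw [outSum_mul_source G (fun x => (μ - G.degree x)⁻¹), Pi.mul_apply, outSum_weightedDiff, hsx,
      ← sub_mul, inv_mul_cancel_left₀ (hne x)]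
  refine ⟨ω, mem_eigenspace_iff.mpr ?_, hω⟩
  ext e
  have hωe : weightedDiff G s e = (μ - G.degree e.val.1) * ω e :=
    (mul_inv_cancel_left₀ (hne e.val.1) _).symm
  rw [mulVecLin_apply, edgeLapMatrix_mulVec_apply, hω, hωe, Pi.smul_apply, smul_eq_mul]
  ring

theorem iSup_eigenspace_edgeLapMatrix_eq_top
    (hL : ⨆ μ, eigenspace ((2 : k) • lapMatrix G k).mulVecLin μ = ⊤)
    (hdeg : ∀ x, eigenspace ((2 : k) • lapMatrix G k).mulVecLin (G.degree x : k) = ⊥) :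
    ⨆ μ, eigenspace (edgeLapMatrix G k).mulVecLin μ = ⊤ := by
  refine iSup_eigenspace_eq_top_of_eigenspace_le_map (outSum G k)
    (ker_outSum_le_iSup_eigenspace G) (fun μ => ?_) hL
  by_cases hμ : ∃ x, μ = G.degree x
  · obtain ⟨x, rfl⟩ := hμ
    exact (hdeg x).le.trans bot_le
  · exact eigenspace_two_smul_lapMatrix_le_map_outSum G (not_exists.mp hμ)

end EdgeLaplacian

theorem stmt_16_general {𝕜 V : Type*} [RCLike 𝕜] [Fintype V] [DecidableEq V] (G : SimpleGraph V)
    [DecidableRel G.Adj]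
    (hdisj : ∀ x : V,
      ((2 : 𝕜) • lapMatrix G 𝕜 - (G.degree x : 𝕜) • (1 : Matrix V V 𝕜)).det ≠ 0) :
    ⨆ μ : 𝕜, eigenspace (edgeLapMatrix G 𝕜).mulVecLin μ = ⊤ :=
  iSup_eigenspace_edgeLapMatrix_eq_top G
    (iSup_eigenspace_mulVecLin_eq_top_of_isHermitian (isHermitian_two_smul_lapMatrix G 𝕜))
    fun x => eigenspace_mulVecLin_eq_bot_of_det_ne_zero (hdisj x)

/-- for a connected graph with at least two vertices, if no vertex degree
is an eigenvalue of `2L`, then the canonical edge Laplacian is diagonalisable over `ℝ`: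
the supremum of its eigenspaces is everything. -/
theorem stmt_16 {V : Type*} [Fintype V] [DecidableEq V] (G : SimpleGraph V)
    [DecidableRel G.Adj] (hconn : G.Connected) (hcard : 1 < Fintype.card V)
    (hdisj : ∀ x : V,
      ((2 : ℝ) • lapMatrix G ℝ - (G.degree x : ℝ) • (1 : Matrix V V ℝ)).det ≠ 0) :
    (⨆ μ : ℝ, Module.End.eigenspace (Matrix.mulVecLin (edgeLapMatrix G ℝ)) μ) = ⊤ :=
  stmt_16_general G hdisj
end
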